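/- arXiv:2301.01140 — 2 statements merged into one kernel-verified Lean document; each statement's English description precedes it below -/
import Mathlib

section
/- Let M ≥ 1, N ≥ 1, R ≥ 1 and W ≥ 1 be integers. Then there exists exactly one real number p ∈ [0,1] satisfying the fixed-point equation (1 - 1/(M·(p^R(W-1)/2 + 1)))^{N-1} + p - 1 = 0. -/
/-!
The equation says that `p` is a fixed point of the map sending a collision probability to the one it
induces through the attempt probability `τ`. A larger `p` means fewer attempts, and fewer attempts
mean fewer collisions, so this map is antitone; it is also a continuous self-map of `[0, 1]`.
Continuity gives a fixed point and antitonicity makes it unique.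
-/

open Function Set

theorem eq_of_isFixedPt_of_antitoneOn {α : Type*} [LinearOrder α] {f : α → α} {s : Set α}
    (hf : AntitoneOn f s) {x y : α} (hxs : x ∈ s) (hys : y ∈ s)
    (hx : IsFixedPt f x) (hy : IsFixedPt f y) : x = y := by
  wlog hxy : x ≤ y generalizing x y
  · exact (this hys hxs hy hx (le_of_not_ge hxy)).symm
  have hyx : y ≤ x := calc
    y = f y := hy.eq.symm
    _ ≤ f x := hf hxs hys hxy
    _ = x := hx.eq
  exact hxy.antisymm hyx

theorem existsUnique_mem_Icc_isFixedPt_of_antitoneOn {α : Type*}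
    [ConditionallyCompleteLinearOrder α] [DenselyOrdered α] [TopologicalSpace α] [OrderTopology α]
    {f : α → α} {a b : α} (hab : a ≤ b) (hcont : ContinuousOn f (Icc a b))
    (hanti : AntitoneOn f (Icc a b)) (hmaps : MapsTo f (Icc a b) (Icc a b)) :
    ∃! x, x ∈ Icc a b ∧ IsFixedPt f x := by
  obtain ⟨x, hxmem, hx⟩ := exists_mem_Icc_isFixedPt_of_mapsTo hcont hab hmaps
  exact ⟨x, ⟨hxmem, hx⟩, fun y ⟨hymem, hy⟩ =>
    eq_of_isFixedPt_of_antitoneOn hanti hymem hxmem hy hx⟩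

/-- The probability `τ` that a station attempts a transmission, as a function of its conditional
collision probability `p`, for retry limit `R` and contention window size `w`. The window size is
allowed to be any real number. -/
noncomputable def attemptProb (R : ℕ) (w p : ℝ) : ℝ :=
  1 / (p ^ R * (w - 1) / 2 + 1)

/-- The probability `1 - p_s` that a transmission collides with one of `n` competitors, when each of
them attempts with probability `τ` and picks one of `m` slots uniformly. In the paper's notation
`n = N - 1`; the number of slots is allowed to be any real number. -/
noncomputable def collisionProb (m : ℝ) (n : ℕ) (τ : ℝ) : ℝ :=
  1 - (1 - τ / m) ^ n

section AttemptProb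

variable (R : ℕ) {w : ℝ}

theorem one_le_attemptProb_denom (hw : 1 ≤ w) {p : ℝ} (hp : 0 ≤ p) :
    1 ≤ p ^ R * (w - 1) / 2 + 1 := by
  have : 0 ≤ w - 1 := sub_nonneg.2 hw
  exact le_add_of_nonneg_left (by positivity)

theorem mapsTo_attemptProb (hw : 1 ≤ w) : MapsTo (attemptProb R w) (Ici 0) (Icc 0 1) := by
  intro p hp
  have hdenom := one_le_attemptProb_denom R hw hp
  have hdenom₀ := zero_le_one.trans hdenom
  exact ⟨one_div_nonneg.2 hdenom₀, div_le_one_of_le₀ hdenom hdenom₀⟩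

theorem antitoneOn_attemptProb (hw : 1 ≤ w) : AntitoneOn (attemptProb R w) (Ici 0) := by
  intro p (hp : 0 ≤ p) q _ hpq
  have hdenom := one_le_attemptProb_denom R hw hp
  have : 0 ≤ w - 1 := sub_nonneg.2 hw
  refine one_div_le_one_div_of_le (zero_lt_one.trans_le hdenom) ?_
  gcongr

theorem continuousOn_attemptProb (hw : 1 ≤ w) : ContinuousOn (attemptProb R w) (Ici 0) :=
  continuousOn_const.div (by fun_prop) fun _ hp =>
    (zero_lt_one.trans_le (one_le_attemptProb_denom R hw hp)).ne'

end AttemptProb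

section CollisionProb

variable {m : ℝ} (n : ℕ)

theorem continuous_collisionProb : Continuous (collisionProb m n) := by
  unfold collisionProb
  fun_prop

theorem monotoneOn_collisionProb (hm : 0 ≤ m) : MonotoneOn (collisionProb m n) (Iic m) := by
  intro τ _ σ (hσ : σ ≤ m) hτσ
  have hσm : 0 ≤ 1 - σ / m := sub_nonneg.2 (div_le_one_of_le₀ hσ hm)
  unfold collisionProb
  gcongr

theorem mapsTo_collisionProb (hm : 0 ≤ m) : MapsTo (collisionProb m n) (Icc 0 m) (Icc 0 1) := by
  rintro τ ⟨hτ, hτm⟩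
  have hbase_nonneg : 0 ≤ 1 - τ / m := sub_nonneg.2 (div_le_one_of_le₀ hτm hm)
  have hbase_le_one : 1 - τ / m ≤ 1 := sub_le_self 1 (div_nonneg hτ hm)
  exact ⟨sub_nonneg.2 (pow_le_one₀ hbase_nonneg hbase_le_one),
    sub_le_self 1 (pow_nonneg hbase_nonneg n)⟩

end CollisionProb

theorem isFixedPt_collisionProb_comp_attemptProb_iff {m w p : ℝ} {n R : ℕ} :
    IsFixedPt (collisionProb m n ∘ attemptProb R w) p ↔
      (1 - 1 / (m * (p ^ R * (w - 1) / 2 + 1))) ^ n + p - 1 = 0 := by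
  rw [IsFixedPt, comp_apply, collisionProb, attemptProb, div_div, mul_comm m]
  constructor <;> intro h <;> linarith

theorem stmt_4_general {m w : ℝ} (hm : 1 ≤ m) (hw : 1 ≤ w) (n R : ℕ) :
    ∃! p : ℝ, p ∈ Icc (0 : ℝ) 1 ∧
      (1 - 1 / (m * (p ^ R * (w - 1) / 2 + 1))) ^ n + p - 1 = 0 := by
  have hm₀ : 0 ≤ m := zero_le_one.trans hm
  have hattempt : MapsTo (attemptProb R w) (Icc 0 1) (Icc 0 m) :=
    (mapsTo_attemptProb R hw).mono Icc_subset_Ici_self (Icc_subset_Icc_right hm)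
  have hcont : ContinuousOn (collisionProb m n ∘ attemptProb R w) (Icc 0 1) :=
    (continuous_collisionProb n).comp_continuousOn
      ((continuousOn_attemptProb R hw).mono Icc_subset_Ici_self)
  have hanti : AntitoneOn (collisionProb m n ∘ attemptProb R w) (Icc 0 1) :=
    (monotoneOn_collisionProb n hm₀).comp_AntitoneOn
      ((antitoneOn_attemptProb R hw).mono Icc_subset_Ici_self)
      (hattempt.mono_right Icc_subset_Iic_self)
  have hmaps : MapsTo (collisionProb m n ∘ attemptProb R w) (Icc 0 1) (Icc 0 1) :=
    (mapsTo_collisionProb n hm₀).comp hattempt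
  simpa only [isFixedPt_collisionProb_comp_attemptProb_iff] using
    existsUnique_mem_Icc_isFixedPt_of_antitoneOn zero_le_one hcont hanti hmaps

/-- There exists exactly one real p ∈ [0,1] satisfying the fixed-point equation
(1 - 1/(M·(p^R(W-1)/2 + 1)))^{N-1} + p - 1 = 0. -/
theorem stmt_4 (M N R W : ℕ) (hM : 1 ≤ M) (hN : 1 ≤ N) (hR : 1 ≤ R) (hW : 1 ≤ W) :
    ∃! p : ℝ, p ∈ Set.Icc (0 : ℝ) 1 ∧
      (1 - 1 / ((M : ℝ) * (p ^ R * ((W : ℝ) - 1) / 2 + 1))) ^ (N - 1) + p - 1 = 0 :=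
  stmt_4_general (Nat.one_le_cast.2 hM) (Nat.one_le_cast.2 hW) (N - 1) R
end

section
/- Let p be a real number with 0 ≤ p < 1, let α be a real number, and let R ≥ 1 and W ≥ 1 be integers. Then ∑_{i=0}^{R-1} (1-p)·p^i·(i + α) + ∑_{i=R}^{∞} (1-p)·p^i·((i-R+1)·(W+1)/2 + R - 1 + α) = (p^R·(W-1)/2 + p)/(1-p) + α. In particular, the average BF training latency equals D = T_BI·((p^R(W-1)/2 + p)/(1-p) + α). -/
/-!
For `i < R` the latency is `i + α`; for `i ≥ R` it exceeds `i + α` by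
`(i - R + 1) * (W - 1) / 2`. So the average is the mean `p / (1 - p) + α` of `i + α` under the
geometric law, plus the mean excess. By memorylessness, conditionally on `i ≥ R` (an event of
probability `p ^ R`) the variable `j = i - R` is again geometric, so `j + 1` has conditional mean
`1 / (1 - p)` and the mean excess is `p ^ R * ((W - 1) / 2) / (1 - p)`.
-/

section GeometricLaw

variable {𝕜 : Type*} [NormedField 𝕜] {p : 𝕜}

theorem hasSum_one_sub_mul_geometric_mul_coe_add (hp : ‖p‖ < 1) (α : 𝕜) :
    HasSum (fun i : ℕ => (1 - p) * p ^ i * (i + α)) (p / (1 - p) + α) := by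
  have hq : 1 - p ≠ 0 := (isUnit_one_sub_of_norm_lt_one hp).ne_zero
  have hlin := (hasSum_coe_mul_geometric_of_norm_lt_one hp).mul_left (1 - p)
  have hconst := (hasSum_geometric_of_norm_lt_one hp).mul_left ((1 - p) * α)
  convert! hlin.add hconst using 1
  · ext i
    ring
  · field_simp

theorem hasSum_one_sub_mul_geometric_add_mul_succ (hp : ‖p‖ < 1) (R : ℕ) (c : 𝕜) :
    HasSum (fun j : ℕ => (1 - p) * p ^ (R + j) * ((j + 1) * c)) (p ^ R * c / (1 - p)) := by
  have hq : 1 - p ≠ 0 := (isUnit_one_sub_of_norm_lt_one hp).ne_zero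
  convert! (hasSum_one_sub_mul_geometric_mul_coe_add hp 1).mul_left (p ^ R * c) using 1
  · ext j
    ring
  · field_simp
    ring

end GeometricLaw

theorem stmt_7_general {𝕜 : Type*} [NormedField 𝕜] [NeZero (2 : 𝕜)]
    {p : 𝕜} (hp : ‖p‖ < 1) (α W : 𝕜) (R : ℕ) :
    (∑ i ∈ Finset.range R, (1 - p) * p ^ i * (i + α)) +
      ∑' j : ℕ, (1 - p) * p ^ (R + j) * ((j + 1) * (W + 1) / 2 + R - 1 + α) =
      (p ^ R * (W - 1) / 2 + p) / (1 - p) + α := by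
  let base : ℕ → 𝕜 := fun i => (1 - p) * p ^ i * (i + α)
  let excess : ℕ → 𝕜 := fun j => (1 - p) * p ^ (R + j) * ((j + 1) * ((W - 1) / 2))
  have hbase : HasSum base (p / (1 - p) + α) := hasSum_one_sub_mul_geometric_mul_coe_add hp α
  have hexcess : HasSum excess (p ^ R * ((W - 1) / 2) / (1 - p)) :=
    hasSum_one_sub_mul_geometric_add_mul_succ hp R _
  have htail (j : ℕ) : (1 - p) * p ^ (R + j) * ((j + 1) * (W + 1) / 2 + R - 1 + α) =
      base (j + R) + excess j := by
    simp only [base, excess, Nat.cast_add, add_comm j R]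
    field_simp
    ring
  calc (∑ i ∈ Finset.range R, base i) + ∑' j : ℕ, _
      = (∑ i ∈ Finset.range R, base i) + (∑' j, base (j + R) + ∑' j, excess j) := by
        rw [tsum_congr htail,
          ((summable_nat_add_iff R).mpr hbase.summable).tsum_add hexcess.summable]
    _ = ∑' i, base i + ∑' j, excess j := by
        rw [← add_assoc, hbase.summable.sum_add_tsum_nat_add]
    _ = p / (1 - p) + α + p ^ R * ((W - 1) / 2) / (1 - p) := by
        rw [hbase.tsum_eq, hexcess.tsum_eq]
    _ = (p ^ R * (W - 1) / 2 + p) / (1 - p) + α := by ring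

/-- ∑_{i=0}^{R-1} (1-p)·p^i·(i + α) + ∑_{i=R}^{∞} (1-p)·p^i·((i-R+1)·(W+1)/2 + R - 1 + α)
= (p^R·(W-1)/2 + p)/(1-p) + α, and consequently the average BF training latency equals
D = T_BI·((p^R(W-1)/2 + p)/(1-p) + α). -/
theorem stmt_7 (p α : ℝ) (hp0 : 0 ≤ p) (hp1 : p < 1) (R W : ℕ) (hR : 1 ≤ R) (hW : 1 ≤ W) :
    ((∑ i ∈ Finset.range R, (1 - p) * p ^ i * ((i : ℝ) + α)) +
      ∑' j : ℕ, (1 - p) * p ^ (R + j) * (((j : ℝ) + 1) * ((W : ℝ) + 1) / 2 + (R : ℝ) - 1 + α) =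
      (p ^ R * ((W : ℝ) - 1) / 2 + p) / (1 - p) + α) ∧
    (∀ TBI : ℝ, TBI * ((∑ i ∈ Finset.range R, (1 - p) * p ^ i * ((i : ℝ) + α)) +
        ∑' j : ℕ, (1 - p) * p ^ (R + j) *
          (((j : ℝ) + 1) * ((W : ℝ) + 1) / 2 + (R : ℝ) - 1 + α)) =
      TBI * ((p ^ R * ((W : ℝ) - 1) / 2 + p) / (1 - p) + α)) := by
  have hmean := stmt_7_general (abs_lt.mpr ⟨by linarith, hp1⟩) α (W : ℝ) R
  exact ⟨hmean, fun TBI => congrArg (TBI * ·) hmean⟩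
end
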